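/- arXiv:1812.07722 — 6 statements merged into one kernel-verified Lean document; each statement's English description precedes it below -/
import Mathlib

section
/- For every fixed threshold v ≥ 0, the map μ ↦ F_μ(v) = ℙ(|μ + Z|² ≤ v) is nonincreasing in μ on [0, ∞). -/
/-!
Slicing in the imaginary part reduces the claim to one dimension: for `r` real, the mass that a
centred Gaussian gives to `{x | (μ + x)² ≤ r}` decreases in `μ ≥ 0`. Given `0 ≤ a ≤ b`, the
reflection `x ↦ -(a + b) - x` exchanges the slices of `a` and `b`. A point of the `b`-slice outside
the `a`-slice satisfies `a + b + 2x < 0`, so the reflection does not increase its absolute value,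
hence does not decrease the Gaussian density. Comparing the two set differences through this
reflection gives the one-dimensional inequality.
-/

open MeasureTheory ProbabilityTheory
open scoped NNReal

noncomputable section

/-- `F σ2 μ v = ℙ(|μ + Z|² ≤ v)` where `Z = X + iY ~ CN(0,σ²)`, i.e. `X` and `Y` are
independent real Gaussians with mean `0` and variance `σ²/2` (here `σ2 = σ²`). -/
def Fdet (σ2 : ℝ≥0) (μ v : ℝ) : ℝ :=
  (((gaussianReal 0 (σ2/2)).prod (gaussianReal 0 (σ2/2)))
    {p : ℝ × ℝ | (μ + p.1)^2 + p.2^2 ≤ v}).toReal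

/-- One-dimensional case: moving a centred interval away from the origin lowers its mass under a
centred Gaussian. -/
lemma gaussianReal_shift_le {w : ℝ≥0} (hw : w ≠ 0) {a b : ℝ} (ha : 0 ≤ a) (hab : a ≤ b) (r : ℝ) :
    gaussianReal 0 w {x | (b + x) ^ 2 ≤ r} ≤ gaussianReal 0 w {x | (a + x) ^ 2 ≤ r} := by
  set A : Set ℝ := {x | (a + x) ^ 2 ≤ r} with hA
  set B : Set ℝ := {x | (b + x) ^ 2 ≤ r} with hB
  have mA : MeasurableSet A := measurableSet_le (by fun_prop) (by fun_prop)
  have mB : MeasurableSet B := measurableSet_le (by fun_prop) (by fun_prop)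
  have hdiff : gaussianReal 0 w (B \ A) ≤ gaussianReal 0 w (A \ B) := by
    rw [gaussianReal_apply _ hw, gaussianReal_apply _ hw, ← lintegral_indicator (mB.diff mA),
      ← lintegral_indicator (mA.diff mB),
      ← lintegral_sub_left_eq_self ((A \ B).indicator (gaussianPDF 0 w)) (-(a + b))]
    refine lintegral_mono fun x => ?_
    by_cases hx : x ∈ B \ A
    · have h1 : (b + x) ^ 2 ≤ r := hx.1
      have h2 : r < (a + x) ^ 2 := not_le.1 hx.2
      have hx' : -(a + b) - x ∈ A \ B := by
        refine ⟨?_, fun h => ?_⟩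
        · change (a + (-(a + b) - x)) ^ 2 ≤ r
          linarith [show (a + (-(a + b) - x)) ^ 2 = (b + x) ^ 2 by ring]
        · have h' : (b + (-(a + b) - x)) ^ 2 ≤ r := h
          linarith [show (b + (-(a + b) - x)) ^ 2 = (a + x) ^ 2 by ring]
      have hneg : a + b + 2 * x < 0 := by
        by_contra! h
        nlinarith [mul_nonneg (sub_nonneg.2 hab) h]
      have hsq : (-(a + b) - x) ^ 2 ≤ x ^ 2 := by
        nlinarith [mul_nonneg (show 0 ≤ a + b by linarith) (neg_nonneg.2 hneg.le)]
      rw [Set.indicator_of_mem hx, Set.indicator_of_mem hx']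
      simp only [gaussianPDF, gaussianPDFReal, sub_zero]
      gcongr
    · simp [Set.indicator_of_notMem hx]
  calc gaussianReal 0 w B = gaussianReal 0 w (B ∩ A) + gaussianReal 0 w (B \ A) :=
        (measure_inter_add_sdiff B mA).symm
    _ ≤ gaussianReal 0 w (A ∩ B) + gaussianReal 0 w (A \ B) := by
        rw [Set.inter_comm]; gcongr
    _ = gaussianReal 0 w A := measure_inter_add_sdiff A mB

/-- For every fixed threshold `v ≥ 0`, the map `μ ↦ F_μ(v) = ℙ(|μ + Z|² ≤ v)` is
nonincreasing in `μ` on `[0,∞)`. -/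
theorem Fdet_antitone (σ2 : ℝ≥0) (hσ2 : 0 < σ2) (v : ℝ) (hv : 0 ≤ v) :
    AntitoneOn (fun μ => Fdet σ2 μ v) (Set.Ici 0) := by
  intro a ha b _ hab
  have hw : σ2 / 2 ≠ 0 := (div_pos hσ2 two_pos).ne'
  have hm (μ : ℝ) : MeasurableSet {p : ℝ × ℝ | (μ + p.1) ^ 2 + p.2 ^ 2 ≤ v} :=
    measurableSet_le (by fun_prop) (by fun_prop)
  refine ENNReal.toReal_mono (measure_ne_top _ _) ?_
  rw [Measure.prod_apply_symm (hm a), Measure.prod_apply_symm (hm b)]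
  refine lintegral_mono fun y => ?_
  have hs (μ : ℝ) : (fun x => (x, y)) ⁻¹' {p : ℝ × ℝ | (μ + p.1) ^ 2 + p.2 ^ 2 ≤ v} =
      {x | (μ + x) ^ 2 ≤ v - y ^ 2} := by
    ext x
    exact (le_sub_iff_add_le (a := (μ + x) ^ 2)).symm
  rw [hs, hs]
  exact gaussianReal_shift_le hw ha hab (v - y ^ 2)

end
end

section
/- For each amplitude A > 0 there is a unique threshold v*(A) ≥ 0 with F_A(v*(A)) = 1 − F_0(v*(A)); define the equal-error flipping probability p(A) := F_A(v*(A)). Then p is strictly decreasing on (0, ∞), p(A) < 1/2 for every A > 0, and p(A) → 0 as A → ∞. In particular, for a hierarchical codebook whose beamforming gains G_l are strictly increasing in the level l and tend to infinity, the induced flipping probabilities p[l] := p(√(P)·G_l) satisfy 1/2 > p[l] > p[l+1] and p[l] → 0. -/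
/-!
The in-beam probability `F_μ(v)` is the Gaussian measure of the disc of squared radius `v` centred
at `(-μ, 0)`. Three facts about it suffice.

* `F_μ` is continuous, vanishes at `v = 0`, tends to `1` at `∞` (circles are null sets, so dominated
  convergence applies to the indicators), and is strictly increasing on `[0, ∞)` (an open annulus
  has positive mass).
* For fixed `v > 0`, `F_μ(v)` is strictly decreasing in `μ ≥ 0`: each horizontal slice of the disc
  is an interval of fixed length whose centre moves away from the mode of a one-dimensional
  centred Gaussian (`gaussianReal_Icc_lt`, integrated over slices in `Fdet_lt`).
* `F_μ(v) → 0` as `μ → ∞`, since a fixed point eventually leaves the disc.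

Hence `F_A + F_0` increases strictly and continuously from `0` to `2`, so it equals `1` at exactly
one `v*(A)`. If `F_A(v) + F_0(v) < 1` then `v < v*(A)` and `p(A) = 1 - F_0(v*(A)) < 1 - F_0(v)`; this
is used with `v = v*(A')`, `A' < A`, for monotonicity, and with `v` fixed and `A` large for the
limit. Finally `p(A) = F_A(v*) < F_0(v*) = 1 - p(A)` yields `p(A) < 1/2`.
-/

open MeasureTheory ProbabilityTheory
open scoped NNReal

noncomputable section

/-- An interval of fixed radius loses mass when its centre moves away from `0`: the difference of
the two masses is the integral over `[-b, -a]` of `φ (x + r) - φ (x - r)`, which is positive because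
`|x + r| < |x - r|` for `x < 0`. -/
lemma gaussianReal_Icc_lt {s : ℝ≥0} (hs : s ≠ 0) {a b r : ℝ} (ha : 0 ≤ a) (hab : a < b)
    (hr : 0 < r) :
    gaussianReal 0 s (Set.Icc (-b - r) (-b + r)) <
      gaussianReal 0 s (Set.Icc (-a - r) (-a + r)) := by
  set φ : ℝ → ℝ := gaussianPDFReal 0 s with hφ
  have hint : ∀ x y, IntervalIntegrable φ volume x y := fun x y =>
    (integrable_gaussianPDFReal 0 s).intervalIntegrable
  have hs' : (0 : ℝ) < s := by positivity
  have hmass : ∀ c, gaussianReal 0 s (Set.Icc (-c - r) (-c + r)) =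
      ENNReal.ofReal (∫ x in (-c - r)..(-c + r), φ x) := by
    intro c
    rw [gaussianReal_apply_eq_integral _ hs, integral_Icc_eq_integral_Ioc,
      intervalIntegral.integral_of_le (by linarith)]
  have hpos : 0 < ∫ x in (-b)..(-a), (φ (x + r) - φ (x - r)) := by
    refine intervalIntegral.intervalIntegral_pos_of_pos_on
      (((integrable_gaussianPDFReal 0 s).comp_add_right r).sub
        ((integrable_gaussianPDFReal 0 s).comp_sub_right r)).intervalIntegrable ?_ (by linarith)
    intro x hx
    have hx0 : x < 0 := by linarith [hx.2]
    rw [sub_pos, hφ]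
    simp only [gaussianPDFReal_def]
    have : 0 < (√(2 * Real.pi * s))⁻¹ := by positivity
    refine mul_lt_mul_of_pos_left (Real.exp_lt_exp.2 ?_) this
    refine div_lt_div_of_pos_right ?_ (by positivity)
    nlinarith [mul_pos_of_neg_of_neg hx0 (neg_neg_of_pos hr)]
  have hsub : (∫ x in (-b)..(-a), (φ (x + r) - φ (x - r))) =
      (∫ x in (-a - r)..(-a + r), φ x) - ∫ x in (-b - r)..(-b + r), φ x := by
    rw [intervalIntegral.integral_sub
      ((integrable_gaussianPDFReal 0 s).comp_add_right r).intervalIntegrable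
      ((integrable_gaussianPDFReal 0 s).comp_sub_right r).intervalIntegrable,
      intervalIntegral.integral_comp_add_right, intervalIntegral.integral_comp_sub_right]
    have h1 := intervalIntegral.integral_add_adjacent_intervals
      (hint (-b - r) (-a - r)) (hint (-a - r) (-a + r))
    have h2 := intervalIntegral.integral_add_adjacent_intervals
      (hint (-b - r) (-b + r)) (hint (-b + r) (-a + r))
    linarith
  have hb : 0 ≤ ∫ x in (-b - r)..(-b + r), φ x :=
    intervalIntegral.integral_nonneg (by linarith) fun x _ => gaussianPDFReal_nonneg _ _ _
  rw [hmass, hmass]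
  exact (ENNReal.ofReal_lt_ofReal_iff (by linarith)).2 (by linarith)

lemma isOpenPosMeasure_gaussianReal {s : ℝ≥0} (hs : s ≠ 0) :
    (gaussianReal 0 s).IsOpenPosMeasure :=
  (gaussianReal_absolutelyContinuous' 0 hs).isOpenPosMeasure

lemma measurableSet_disc (μ v : ℝ) :
    MeasurableSet {p : ℝ × ℝ | (μ + p.1) ^ 2 + p.2 ^ 2 ≤ v} :=
  measurableSet_le (by fun_prop) (by fun_prop)

lemma disc_slice {v y : ℝ} (h : y ^ 2 ≤ v) (μ : ℝ) :
    (fun x => (x, y)) ⁻¹' {p : ℝ × ℝ | (μ + p.1) ^ 2 + p.2 ^ 2 ≤ v} =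
      Set.Icc (-μ - √(v - y ^ 2)) (-μ + √(v - y ^ 2)) := by
  ext x
  have : (μ + x) ^ 2 + y ^ 2 ≤ v ↔ |μ + x| ≤ √(v - y ^ 2) := by
    rw [Real.le_sqrt (abs_nonneg _) (by linarith), sq_abs]
    constructor <;> intro h <;> linarith
  simp only [Set.mem_preimage, Set.mem_ofPred_eq, this, abs_le, Set.mem_Icc]
  constructor <;> rintro ⟨h1, h2⟩ <;> constructor <;> linarith

/-- Moving the centre of the disc away from the origin strictly decreases its mass, by comparison
of horizontal slices. -/
lemma Fdet_lt {σ2 : ℝ≥0} (hσ2 : 0 < σ2) {a b v : ℝ} (ha : 0 ≤ a) (hab : a < b) (hv : 0 < v) :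
    Fdet σ2 b v < Fdet σ2 a v := by
  have hs : σ2 / 2 ≠ 0 := by positivity
  have := isOpenPosMeasure_gaussianReal hs
  have := nullSingletonClass_gaussianReal (μ := 0) hs
  unfold Fdet
  refine (ENNReal.toReal_lt_toReal (measure_ne_top _ _) (measure_ne_top _ _)).2 ?_
  have hfin := measure_ne_top ((gaussianReal 0 (σ2 / 2)).prod (gaussianReal 0 (σ2 / 2)))
    {p : ℝ × ℝ | (b + p.1) ^ 2 + p.2 ^ 2 ≤ v}
  rw [Measure.prod_apply_symm (measurableSet_disc b v)] at hfin
  rw [Measure.prod_apply_symm (measurableSet_disc b v),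
    Measure.prod_apply_symm (measurableSet_disc a v)]
  have hlt : ∀ y : ℝ, y ^ 2 < v →
      gaussianReal 0 (σ2 / 2) ((fun x => (x, y)) ⁻¹' {p : ℝ × ℝ | (b + p.1) ^ 2 + p.2 ^ 2 ≤ v}) <
      gaussianReal 0 (σ2 / 2) ((fun x => (x, y)) ⁻¹' {p : ℝ × ℝ | (a + p.1) ^ 2 + p.2 ^ 2 ≤ v}) := by
    intro y hy
    rw [disc_slice hy.le, disc_slice hy.le]
    exact gaussianReal_Icc_lt hs ha hab (Real.sqrt_pos.2 (by linarith))
  refine lintegral_strict_mono_of_ae_le_of_ae_lt_on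
    (measurable_measure_prodMk_right (measurableSet_disc a v)).aemeasurable hfin
    (Filter.Eventually.of_forall fun y => ?_) (s := {y : ℝ | y ^ 2 < v}) ?_
    (Filter.Eventually.of_forall hlt)
  · rcases lt_trichotomy (y ^ 2) v with h | h | h
    · exact (hlt y h).le
    · simp [disc_slice h.le, h]
    · have : (fun x => (x, y)) ⁻¹' {p : ℝ × ℝ | (b + p.1) ^ 2 + p.2 ^ 2 ≤ v} = ∅ := by
        ext x
        simp only [Set.mem_preimage, Set.mem_ofPred_eq, Set.mem_empty_iff_false, iff_false, not_le]
        nlinarith [sq_nonneg (b + x)]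
      beta_reduce
      rw [this]
      simp
  · exact (isOpen_lt (by fun_prop) (by fun_prop)).measure_ne_zero _ ⟨0, by simpa using hv⟩

lemma circle_null {s : ℝ≥0} (hs : s ≠ 0) (μ v : ℝ) :
    ∀ᵐ p ∂((gaussianReal 0 s).prod (gaussianReal 0 s)), (μ + p.1) ^ 2 + p.2 ^ 2 ≠ v := by
  have := nullSingletonClass_gaussianReal (μ := 0) hs
  have hm : MeasurableSet {p : ℝ × ℝ | (μ + p.1) ^ 2 + p.2 ^ 2 = v} :=
    measurableSet_eq_fun (by fun_prop) (by fun_prop)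
  rw [ae_iff]
  simp only [ne_eq, not_not]
  rw [Measure.measure_prod_null hm]
  refine Filter.Eventually.of_forall fun x => ?_
  -- each slice of a circle consists of at most two points
  refine Set.Finite.measure_zero (Set.Finite.subset
    (Set.toFinite {√(v - (μ + x) ^ 2), -√(v - (μ + x) ^ 2)}) fun y hy => ?_) _
  have hy' : (μ + x) ^ 2 + y ^ 2 = v := hy
  have : √(v - (μ + x) ^ 2) = |y| := by rw [← Real.sqrt_sq_eq_abs]; congr 1; linarith
  simp only [this, Set.mem_insert_iff, Set.mem_singleton_iff]
  rcases abs_cases y with h | h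
  · left; linarith
  · right; linarith

/-- Dominated convergence for discs whose centre and squared radius both vary. -/
lemma tendsto_Fdet {ι : Type*} {l : Filter ι} [l.IsCountablyGenerated] (σ2 : ℝ≥0) (u w : ι → ℝ)
    {S : Set (ℝ × ℝ)} (hS : MeasurableSet S)
    (h : ∀ᵐ p ∂((gaussianReal 0 (σ2 / 2)).prod (gaussianReal 0 (σ2 / 2))),
      ∀ᶠ i in l, (u i + p.1) ^ 2 + p.2 ^ 2 ≤ w i ↔ p ∈ S) :
    Filter.Tendsto (fun i => Fdet σ2 (u i) (w i)) l
      (nhds (((gaussianReal 0 (σ2 / 2)).prod (gaussianReal 0 (σ2 / 2))) S).toReal) :=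
  (ENNReal.tendsto_toReal (measure_ne_top _ _)).comp
    (tendsto_measure_of_ae_tendsto_indicator_of_isFiniteMeasure l hS
      (fun i => measurableSet_disc (u i) (w i)) h)

lemma continuous_Fdet {σ2 : ℝ≥0} (hσ2 : 0 < σ2) (μ : ℝ) : Continuous (Fdet σ2 μ) := by
  refine continuous_iff_continuousAt.2 fun v => ?_
  refine tendsto_Fdet σ2 (fun _ => μ) id (measurableSet_disc μ v) ?_
  filter_upwards [circle_null (s := σ2 / 2) (by positivity) μ v] with p hp
  rcases lt_or_gt_of_ne hp with h | h
  · filter_upwards [lt_mem_nhds h] with w hw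
    exact ⟨fun _ => h.le, fun _ => hw.le⟩
  · filter_upwards [gt_mem_nhds h] with w hw
    exact ⟨fun h' => absurd h' (not_le.2 hw), fun h' => absurd h' (not_le.2 h)⟩

lemma tendsto_Fdet_atTop (σ2 : ℝ≥0) (μ : ℝ) :
    Filter.Tendsto (Fdet σ2 μ) Filter.atTop (nhds 1) := by
  have := tendsto_Fdet σ2 (l := Filter.atTop) (fun _ => μ) id MeasurableSet.univ
    (Filter.Eventually.of_forall fun p => by
      filter_upwards [Filter.eventually_ge_atTop ((μ + p.1) ^ 2 + p.2 ^ 2)] with w hw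
      simpa using hw)
  simpa using this

lemma tendsto_Fdet_amplitude (σ2 : ℝ≥0) (v : ℝ) :
    Filter.Tendsto (fun μ => Fdet σ2 μ v) Filter.atTop (nhds 0) := by
  have := tendsto_Fdet σ2 (l := Filter.atTop) id (fun _ => v) MeasurableSet.empty
    (Filter.Eventually.of_forall fun p => by
      filter_upwards [Filter.eventually_gt_atTop (|v| + 1 - p.1)] with w hw
      simp only [id, Set.mem_empty_iff_false, iff_false, not_le]
      nlinarith [sq_nonneg p.2, le_abs_self v, abs_nonneg v])
  simpa using this

lemma Fdet_strictMonoOn {σ2 : ℝ≥0} (hσ2 : 0 < σ2) (μ : ℝ) :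
    StrictMonoOn (Fdet σ2 μ) (Set.Ici 0) := by
  have hs : σ2 / 2 ≠ 0 := by positivity
  have := isOpenPosMeasure_gaussianReal hs
  intro v hv w hw hvw
  have hv' : 0 ≤ v := hv
  set γ := (gaussianReal 0 (σ2 / 2)).prod (gaussianReal 0 (σ2 / 2))
  set U : Set (ℝ × ℝ) := {p | v < (μ + p.1) ^ 2 + p.2 ^ 2} ∩ {p | (μ + p.1) ^ 2 + p.2 ^ 2 < w}
  have hU : IsOpen U :=
    (isOpen_lt (by fun_prop) (by fun_prop)).inter (isOpen_lt (by fun_prop) (by fun_prop))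
  have hne : U.Nonempty := by
    refine ⟨(-μ, √((v + w) / 2)), ?_, ?_⟩ <;>
    · have := Real.sq_sqrt (show 0 ≤ (v + w) / 2 by linarith)
      simp only [Set.mem_ofPred_eq, this]
      linarith
  have hpos : 0 < γ U := hU.measure_pos _ hne
  refine (ENNReal.toReal_lt_toReal (measure_ne_top _ _) (measure_ne_top _ _)).2 ?_
  have hdisj : Disjoint {p : ℝ × ℝ | (μ + p.1) ^ 2 + p.2 ^ 2 ≤ v} U :=
    Set.disjoint_left.2 fun p hp hpU => not_lt.2 (show (μ + p.1) ^ 2 + p.2 ^ 2 ≤ v from hp) hpU.1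
  calc γ {p | (μ + p.1) ^ 2 + p.2 ^ 2 ≤ v}
      < γ {p | (μ + p.1) ^ 2 + p.2 ^ 2 ≤ v} + γ U :=
        ENNReal.lt_add_right (measure_ne_top _ _) hpos.ne'
    _ = γ ({p | (μ + p.1) ^ 2 + p.2 ^ 2 ≤ v} ∪ U) :=
        (measure_union hdisj hU.measurableSet).symm
    _ ≤ γ {p | (μ + p.1) ^ 2 + p.2 ^ 2 ≤ w} := by
        refine measure_mono ?_
        rintro p (hp | hp)
        · exact le_trans hp hvw.le
        · exact (show (μ + p.1) ^ 2 + p.2 ^ 2 < w from hp.2).le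

lemma Fdet_zero {σ2 : ℝ≥0} (hσ2 : 0 < σ2) (μ : ℝ) : Fdet σ2 μ 0 = 0 := by
  have : ((gaussianReal 0 (σ2 / 2)).prod (gaussianReal 0 (σ2 / 2)))
      {p : ℝ × ℝ | (μ + p.1) ^ 2 + p.2 ^ 2 ≤ 0} = 0 := by
    have h := circle_null (s := σ2 / 2) (by positivity) μ 0
    rw [ae_iff] at h
    refine measure_mono_null (fun p hp => ?_) h
    have hp' : (μ + p.1) ^ 2 + p.2 ^ 2 ≤ 0 := hp
    simp only [ne_eq, not_not, Set.mem_ofPred_eq]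
    exact le_antisymm hp' (by positivity)
  simp [Fdet, this]

/-- For each amplitude `A > 0` there is a unique threshold `v*(A) ≥ 0` equalizing the
miss probability `F_A(v)` and the false-alarm probability `1 − F_0(v)`; the resulting
equal-error flipping probability `p(A) := F_A(v*(A))` is strictly decreasing on
`(0,∞)`, is `< 1/2`, and tends to `0` as `A → ∞`.  In particular, for strictly
increasing unbounded beamforming gains `G_l`, the flipping probabilities
`p[l] := p(√P · G_l)` satisfy `1/2 > p[l] > p[l+1]` and `p[l] → 0`. -/
theorem equal_error_flip_probability (σ2 : ℝ≥0) (hσ2 : 0 < σ2) :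
    ∃ vstar : ℝ → ℝ,
      (∀ A : ℝ, 0 < A →
        0 ≤ vstar A ∧
        Fdet σ2 A (vstar A) = 1 - Fdet σ2 0 (vstar A) ∧
        (∀ v : ℝ, 0 ≤ v → Fdet σ2 A v = 1 - Fdet σ2 0 v → v = vstar A)) ∧
      StrictAntiOn (fun A => Fdet σ2 A (vstar A)) (Set.Ioi 0) ∧
      (∀ A : ℝ, 0 < A → Fdet σ2 A (vstar A) < 1/2) ∧
      Filter.Tendsto (fun A => Fdet σ2 A (vstar A)) Filter.atTop (nhds 0) ∧
      (∀ (P : ℝ) (Gl : ℕ → ℝ), 0 < P → (∀ l, 0 < Gl l) → StrictMono Gl →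
        Filter.Tendsto Gl Filter.atTop Filter.atTop →
        (∀ l, Fdet σ2 (Real.sqrt P * Gl l) (vstar (Real.sqrt P * Gl l)) < 1/2 ∧
          Fdet σ2 (Real.sqrt P * Gl (l+1)) (vstar (Real.sqrt P * Gl (l+1))) <
            Fdet σ2 (Real.sqrt P * Gl l) (vstar (Real.sqrt P * Gl l))) ∧
        Filter.Tendsto (fun l => Fdet σ2 (Real.sqrt P * Gl l) (vstar (Real.sqrt P * Gl l)))
          Filter.atTop (nhds 0)) := by
  have hmono : ∀ A, StrictMonoOn (fun v => Fdet σ2 A v + Fdet σ2 0 v) (Set.Ici 0) := fun A =>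
    (Fdet_strictMonoOn hσ2 A).add (Fdet_strictMonoOn hσ2 0)
  have hex : ∀ A, ∃ v, 0 ≤ v ∧ Fdet σ2 A v + Fdet σ2 0 v = 1 := by
    intro A
    have hlim : Filter.Tendsto (fun v => Fdet σ2 A v + Fdet σ2 0 v) Filter.atTop
        (nhds (1 + 1)) := (tendsto_Fdet_atTop σ2 A).add (tendsto_Fdet_atTop σ2 0)
    obtain ⟨M, hM, hM0⟩ := ((hlim.eventually (lt_mem_nhds (show (1 : ℝ) < 1 + 1 by norm_num))).and
      (Filter.eventually_ge_atTop 0)).exists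
    obtain ⟨v, hv, hv1⟩ := intermediate_value_Icc hM0
      ((continuous_Fdet hσ2 A).add (continuous_Fdet hσ2 0)).continuousOn
      (show (1 : ℝ) ∈ Set.Icc _ _ from ⟨by simp [Fdet_zero hσ2], hM.le⟩)
    exact ⟨v, hv.1, hv1⟩
  choose vs hvs0 hvs using hex
  have hvpos : ∀ A, 0 < vs A := by
    intro A
    refine lt_of_le_of_ne (hvs0 A) fun h => ?_
    have := hvs A
    rw [← h, Fdet_zero hσ2, Fdet_zero hσ2] at this
    norm_num at this
  have hkey : ∀ A v, 0 ≤ v → Fdet σ2 A v + Fdet σ2 0 v < 1 →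
      Fdet σ2 A (vs A) < 1 - Fdet σ2 0 v := by
    intro A v hv h
    have hlt : v < vs A := ((hmono A).lt_iff_lt hv (hvs0 A)).1 (h.trans_eq (hvs A).symm)
    have := Fdet_strictMonoOn hσ2 0 hv (hvs0 A) hlt
    linarith [hvs A]
  have hanti : StrictAntiOn (fun A => Fdet σ2 A (vs A)) (Set.Ioi 0) := by
    intro A hA B hB hAB
    have h1 := Fdet_lt hσ2 (le_of_lt hA) hAB (hvpos A)
    have h2 := hkey B (vs A) (hvs0 A) (by linarith [hvs A])
    show Fdet σ2 B (vs B) < Fdet σ2 A (vs A)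
    linarith [hvs A]
  have hhalf : ∀ A : ℝ, 0 < A → Fdet σ2 A (vs A) < 1 / 2 := by
    intro A hA
    linarith [Fdet_lt hσ2 le_rfl hA (hvpos A), hvs A]
  have hlim : Filter.Tendsto (fun A => Fdet σ2 A (vs A)) Filter.atTop (nhds 0) := by
    refine tendsto_order.2 ⟨fun a ha => Filter.Eventually.of_forall fun A =>
      ha.trans_le ENNReal.toReal_nonneg, fun ε hε => ?_⟩
    obtain ⟨v, hv, hv0⟩ := (((tendsto_Fdet_atTop σ2 0).eventually
      (lt_mem_nhds (show 1 - ε < 1 by linarith))).and (Filter.eventually_ge_atTop 0)).exists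
    have hv1 : Fdet σ2 0 v < 1 := by
      have h1 := Fdet_strictMonoOn hσ2 0 hv0 (show (0 : ℝ) ≤ v + 1 by linarith)
        (show v < v + 1 by linarith)
      have h2 : Fdet σ2 0 (v + 1) ≤ 1 := measureReal_le_one
      linarith
    filter_upwards [(tendsto_Fdet_amplitude σ2 v).eventually
      (gt_mem_nhds (show 0 < 1 - Fdet σ2 0 v by linarith))] with A hA
    linarith [hkey A v hv0 (by linarith)]
  refine ⟨vs, fun A _ => ⟨hvs0 A, by linarith [hvs A], fun v hv h => ?_⟩, hanti, hhalf, hlim, ?_⟩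
  · refine (hmono A).injOn hv (hvs0 A) ?_
    show Fdet σ2 A v + Fdet σ2 0 v = Fdet σ2 A (vs A) + Fdet σ2 0 (vs A)
    linarith [hvs A]
  · intro P Gl hP hG hGm hGt
    have hsP : 0 < Real.sqrt P := Real.sqrt_pos.2 hP
    refine ⟨fun l => ⟨hhalf _ (mul_pos hsP (hG l)), ?_⟩, hlim.comp (hGt.const_mul_atTop hsP)⟩
    exact hanti (mul_pos hsP (hG l)) (mul_pos hsP (hG (l + 1)))
      (mul_lt_mul_of_pos_left (hGm l.lt_succ_self) hsP)

end
end

section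
/- Let π be a probability vector on {1,…,2^S} with 0 < πᵢ < 1 for all i, let D be the node (at level l) selected by the hiePM rule from π, and let the observation channel be P_{z|i} = Bern(1−p[l]) if i ∈ D and P_{z|i} = Bern(p[l]) if i ∉ D, where 1/2 > p[1] > p[2] > ⋯ > p[S] > 0. Then (i) EJS(π) ≥ I(1/3; p[l]); and (ii) for any π̃ ∈ (1/2, 1), if max_i πᵢ ≥ π̃ then EJS(π) ≥ π̃ · C1(p[S]). -/
/-!
The observation law given `i` is `Bern (x i)` with `x i = 1 - p` on the selected node `D` and
`x i = p` off it, so the extrinsic mixture is `Bern (r i)`, where the overall mean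
`m = q (1 - p) + (1 - q) p`, `q = π(D)`, satisfies `m = π i * x i + (1 - π i) * r i`.
Convexity of the divergence in its second argument (`kl_mix_le`) gives
`KL (x i, m) ≤ (1 - π i) KL (x i, r i) ≤ KL (x i, r i)`; summing, `EJS ≥ I(q; p)` (`MI_le_ejs`).

The descent (`descend_spec`) stops either at a node of mass in `[1/3, 2/3]` or at a leaf of mass
`> 1/2`. In the first case `I(q; p) ≥ I(1/3; p)` because binary entropy is concave and symmetric
(`MI_third_le`). In the second case the term of the selected leaf `a` alone contributes
`π a * C1 p` (`leaf_le_ejs`), and `C1 p / 2 ≥ (4/9) C1 p ≥ I(1/3; p)` by the same convexity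
(`MI_third_le_C1`). A leaf of mass `> 1/2` is always reached by the descent
(`descend_heavy_leaf`), which gives the second bound.
-/

open Finset
open scoped ENNReal NNReal

noncomputable section

/-- Bernoulli pmf on `Bool` with probability `p` of `true`. -/
def bern (p : ℝ) : Bool → ℝ := fun b => if b then p else 1 - p

/-- KL divergence between two pmfs on `Bool`. -/
def KLb (P Q : Bool → ℝ) : ℝ := ∑ b : Bool, P b * Real.log (P b / Q b)

/-- `C1 p = D(Bern(p) ‖ Bern(1-p))`. -/
def C1 (p : ℝ) : ℝ := KLb (bern p) (bern (1 - p))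

/-- Binary entropy. -/
def Hb (x : ℝ) : ℝ := -x * Real.log x - (1 - x) * Real.log (1 - x)

/-- Mutual information of input `Bern(q)` through a BSC with crossover probability `p`. -/
def MI (q p : ℝ) : ℝ := Hb (q * (1 - p) + (1 - q) * p) - Hb p

/-- The constant `K₀`. -/
def K0 (p1 : ℝ) : ℝ :=
  min (MI (1/3) p1)
    (2/3 * KLb (fun b => 1/3 * bern (1 - p1) b + 2/3 * bern p1 b) (bern p1))

/-- The set of leaves of the node at level `l`, index `k` (0-indexed), in the
complete binary tree of depth `S` whose leaves are `Fin (2^S)`. -/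
def node (S l k : ℕ) : Finset (Fin (2^S)) :=
  Finset.univ.filter fun i => k * 2^(S - l) ≤ (i : ℕ) ∧ (i : ℕ) < (k+1) * 2^(S - l)

/-- Posterior mass of node `(l,k)`. -/
def mass (S : ℕ) (π : Fin (2^S) → ℝ) (l k : ℕ) : ℝ := ∑ i ∈ node S l k, π i

/-- hiePM descent: starting at a node `(l,k)` of mass `> 1/2`, descend towards the
child with larger mass while the mass stays `> 1/2`; upon reaching the first node of
mass `≤ 1/2`, select between that node and its parent whichever has mass closer to `1/2`;
a leaf of mass `> 1/2` is selected. -/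
def descend (S : ℕ) (π : Fin (2^S) → ℝ) : ℕ → ℕ → ℕ → ℕ × ℕ
  | 0, l, k => (l, k)
  | fuel + 1, l, k =>
    if l = S then (l, k)
    else
      let k' := if mass S π (l+1) (2*k+1) ≤ mass S π (l+1) (2*k) then 2*k else 2*k+1
      if 1/2 < mass S π (l+1) k' then descend S π fuel (l+1) k'
      else if |mass S π (l+1) k' - 1/2| ≤ |mass S π l k - 1/2| then (l+1, k')
      else (l, k)

/-- The node `(l, k)` selected by the hiePM rule from the posterior `π`. -/
def select (S : ℕ) (π : Fin (2^S) → ℝ) : ℕ × ℕ := descend S π S 0 0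

/-- Likelihood of the 1-bit observation `z` given `φ = i` when node `(l,k)` is probed,
with crossover probability `p l` at level `l`. -/
def like (S : ℕ) (p : ℕ → ℝ) (l k : ℕ) (i : Fin (2^S)) (z : Bool) : ℝ :=
  bern (if i ∈ node S l k then 1 - p l else p l) z

/-- Extrinsic Jensen–Shannon divergence of the posterior `π` under the hiePM 1-bit
measurement model: the node `D = select S π` is probed and the observation has
conditional pmf `Bern(1−p[l_D])` for `i ∈ D` and `Bern(p[l_D])` for `i ∉ D`. -/
def EJS (S : ℕ) (p : ℕ → ℝ) (π : Fin (2^S) → ℝ) : ℝ :=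
  ∑ i, π i *
    KLb (like S p (select S π).1 (select S π).2 i)
      (fun z =>
        (∑ j ∈ Finset.univ.erase i, π j * like S p (select S π).1 (select S π).2 j z) /
          (1 - π i))

/-! ### Divergence between Bernoulli laws -/

lemma kl_bern (x r : ℝ) : KLb (bern x) (bern r) =
    x * Real.log (x / r) + (1 - x) * Real.log ((1 - x) / (1 - r)) := by
  simp [KLb, bern]

lemma kl_nonneg {x r : ℝ} (hx0 : 0 < x) (hx1 : x < 1) (hr0 : 0 < r) (hr1 : r < 1) :
    0 ≤ KLb (bern x) (bern r) := by
  rw [kl_bern]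
  have h1 : 0 < 1 - x := by linarith
  have h2 : 0 < 1 - r := by linarith
  have e1 := Real.one_sub_inv_le_log_of_pos (div_pos hx0 hr0)
  have e2 := Real.one_sub_inv_le_log_of_pos (div_pos h1 h2)
  have f1 := mul_le_mul_of_nonneg_left e1 hx0.le
  have f2 := mul_le_mul_of_nonneg_left e2 h1.le
  have g1 : x * (1 - (x / r)⁻¹) = x - r := by field_simp
  have g2 : (1 - x) * (1 - ((1 - x) / (1 - r))⁻¹) = (1 - x) - (1 - r) := by field_simp
  linarith

lemma log_mix_le {x r t : ℝ} (hx : 0 < x) (hr : 0 < r) (ht0 : 0 ≤ t) (ht1 : t ≤ 1) :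
    Real.log (x / (t * x + (1 - t) * r)) ≤ (1 - t) * Real.log (x / r) := by
  have hc := strictConcaveOn_log_Ioi.concaveOn.2 (Set.mem_Ioi.2 hx) (Set.mem_Ioi.2 hr) ht0
    (sub_nonneg.2 ht1) (by ring)
  simp only [smul_eq_mul] at hc
  have hm : 0 < t * x + (1 - t) * r := by
    rcases ht0.eq_or_lt with h | h
    · subst h; simpa using hr
    · have := mul_nonneg (sub_nonneg.2 ht1) hr.le
      have := mul_pos h hx
      linarith
  rw [Real.log_div hx.ne' hm.ne', Real.log_div hx.ne' hr.ne']
  linarith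

/-- Convexity of `r ↦ KL (x, r)` on the segment from `x` to `r`, where it vanishes at `x`. -/
lemma kl_mix_le {x r t : ℝ} (hx0 : 0 < x) (hx1 : x < 1) (hr0 : 0 < r) (hr1 : r < 1)
    (ht0 : 0 ≤ t) (ht1 : t ≤ 1) :
    KLb (bern x) (bern (t * x + (1 - t) * r)) ≤ (1 - t) * KLb (bern x) (bern r) := by
  rw [kl_bern, kl_bern]
  have h1 : 0 < 1 - x := by linarith
  have h2 : 0 < 1 - r := by linarith
  have a := mul_le_mul_of_nonneg_left (log_mix_le hx0 hr0 ht0 ht1) hx0.le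
  have b := mul_le_mul_of_nonneg_left (log_mix_le h1 h2 ht0 ht1) h1.le
  have e : t * (1 - x) + (1 - t) * (1 - r) = 1 - (t * x + (1 - t) * r) := by ring
  rw [e] at b
  linarith

lemma C1_symm (p : ℝ) : KLb (bern (1 - p)) (bern p) = C1 p := by
  rw [C1, kl_bern, kl_bern, sub_sub_cancel]; ring

lemma C1_nonneg {p : ℝ} (h0 : 0 < p) (h1 : p < 1) : 0 ≤ C1 p :=
  kl_nonneg h0 h1 (by linarith) (by linarith)

lemma mean_mem {q p : ℝ} (hp0 : 0 < p) (hp1 : p < 1) (hq0 : 0 ≤ q) (hq1 : q ≤ 1) :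
    0 < q * (1 - p) + (1 - q) * p ∧ q * (1 - p) + (1 - q) * p < 1 := by
  constructor <;>
    rcases hq0.eq_or_lt with rfl | h
  · simpa using hp0
  · nlinarith [mul_nonneg (sub_nonneg.2 hq1) hp0.le, mul_pos h (sub_pos.2 hp1)]
  · simpa using hp1
  · nlinarith [mul_nonneg (sub_nonneg.2 hq1) (sub_pos.2 hp1).le, mul_pos h hp0]

/-- Mutual information as the average divergence from the output law. -/
lemma MI_eq {q p : ℝ} (hp0 : 0 < p) (hp1 : p < 1) (hq0 : 0 ≤ q) (hq1 : q ≤ 1) :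
    MI q p = q * KLb (bern (1 - p)) (bern (q * (1 - p) + (1 - q) * p)) +
      (1 - q) * KLb (bern p) (bern (q * (1 - p) + (1 - q) * p)) := by
  obtain ⟨hm0, hm1⟩ := mean_mem hp0 hp1 hq0 hq1
  rw [MI, Hb, Hb, kl_bern, kl_bern, sub_sub_cancel]
  have h1 : 1 - p ≠ 0 := by linarith
  have h2 : 1 - (q * (1 - p) + (1 - q) * p) ≠ 0 := by linarith
  rw [Real.log_div h1 hm0.ne', Real.log_div hp0.ne' h2, Real.log_div hp0.ne' hm0.ne',
    Real.log_div h1 h2]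
  ring

lemma MI_third_le_C1 {p : ℝ} (hp0 : 0 < p) (hp1 : p < 1) : MI (1/3) p ≤ 4/9 * C1 p := by
  rw [MI_eq hp0 hp1 (by norm_num) (by norm_num)]
  have a := kl_mix_le (x := 1 - p) (r := p) (t := 1/3) (by linarith) (by linarith) hp0 hp1
    (by norm_num) (by norm_num)
  have b := kl_mix_le (x := p) (r := 1 - p) (t := 2/3) hp0 hp1 (by linarith) (by linarith)
    (by norm_num) (by norm_num)
  have e : 2/3 * p + (1 - 2/3) * (1 - p) = 1/3 * (1 - p) + (1 - 1/3) * p := by ring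
  rw [e] at b
  rw [C1_symm] at a
  change _ ≤ _ * C1 p at b
  linarith

lemma Hb_eq (x : ℝ) : Hb x = Real.binEntropy x := by
  rw [Hb, Real.binEntropy, Real.log_inv, Real.log_inv]; ring

lemma MI_third_le {q p : ℝ} (hp0 : 0 < p) (hp1 : p < 1) (hq0 : 1/3 ≤ q) (hq1 : q ≤ 2/3) :
    MI (1/3) p ≤ MI q p := by
  simp only [MI, Hb_eq]
  set m := 1/3 * (1 - p) + (1 - 1/3) * p with hm
  have hmem : m ∈ Set.Icc (0:ℝ) 1 := ⟨by rw [hm]; linarith, by rw [hm]; linarith⟩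
  have hmem' : 1 - m ∈ Set.Icc (0:ℝ) 1 := ⟨by linarith [hmem.2], by linarith [hmem.1]⟩
  -- The mean at `q` is a convex combination of the means at `1/3` and `2/3`, where entropies agree.
  have h := Real.strictConcave_binEntropy.concaveOn.2 hmem hmem'
    (show 0 ≤ 2 - 3 * q by linarith) (show 0 ≤ 3 * q - 1 by linarith) (by ring)
  simp only [smul_eq_mul, Real.binEntropy_one_sub] at h
  have e : (2 - 3 * q) * m + (3 * q - 1) * (1 - m) = q * (1 - p) + (1 - q) * p := by
    rw [hm]; ring
  rw [e] at h
  linarith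

/-! ### Extrinsic divergence for a binary partition -/

section Partition

variable {ι : Type*} [Fintype ι] [DecidableEq ι]

/-- Success probability of the mixture of the laws `Bern (x j)`, `j ≠ i`. -/
def exMean (w x : ι → ℝ) (i : ι) : ℝ := (∑ j ∈ univ.erase i, w j * x j) / (1 - w i)

variable {w x : ι → ℝ}

lemma sum_erase_weights (hsum : ∑ i, w i = 1) (i : ι) :
    ∑ j ∈ univ.erase i, w j = 1 - w i := by
  have := Finset.add_sum_erase univ w (mem_univ i)
  linarith

lemma mixture_eq (hsum : ∑ i, w i = 1) (hlt : ∀ i, w i < 1) (i : ι) :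
    (fun z => (∑ j ∈ univ.erase i, w j * bern (x j) z) / (1 - w i)) = bern (exMean w x i) := by
  have h : 1 - w i ≠ 0 := by linarith [hlt i]
  funext z
  cases z
  · simp only [bern, exMean, Bool.false_eq_true, if_false, mul_sub, mul_one,
      Finset.sum_sub_distrib, sum_erase_weights hsum]
    field_simp
  · simp [bern, exMean]

lemma mean_eq_exMean (hlt : ∀ i, w i < 1) (i : ι) :
    ∑ j, w j * x j = w i * x i + (1 - w i) * exMean w x i := by
  have h : 1 - w i ≠ 0 := by linarith [hlt i]
  rw [exMean, mul_div_cancel₀ _ h]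
  exact (Finset.add_sum_erase univ (fun j => w j * x j) (mem_univ i)).symm

lemma exMean_mem (hpos : ∀ i, 0 < w i) (hlt : ∀ i, w i < 1) (hsum : ∑ i, w i = 1)
    (hx : ∀ i, 0 < x i ∧ x i < 1) (i : ι) : 0 < exMean w x i ∧ exMean w x i < 1 := by
  have h : 0 < 1 - w i := by linarith [hlt i]
  have hne : (univ.erase i).Nonempty := by
    by_contra hc
    rw [Finset.not_nonempty_iff_eq_empty] at hc
    have := sum_erase_weights hsum i
    rw [hc] at this
    simp at this
    linarith
  refine ⟨div_pos (Finset.sum_pos (fun j _ => mul_pos (hpos j) (hx j).1) hne) h, ?_⟩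
  rw [exMean, div_lt_one h, ← sum_erase_weights hsum i]
  refine Finset.sum_lt_sum_of_nonempty hne fun j _ => ?_
  have := mul_lt_mul_of_pos_left (hx j).2 (hpos j)
  linarith

/-- The Jensen–Shannon divergence is a lower bound for the extrinsic one. -/
lemma js_le_ejs (hpos : ∀ i, 0 < w i) (hlt : ∀ i, w i < 1) (hsum : ∑ i, w i = 1)
    (hx : ∀ i, 0 < x i ∧ x i < 1) :
    ∑ i, w i * KLb (bern (x i)) (bern (∑ j, w j * x j)) ≤
      ∑ i, w i * KLb (bern (x i)) (bern (exMean w x i)) := by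
  refine Finset.sum_le_sum fun i _ => mul_le_mul_of_nonneg_left ?_ (hpos i).le
  obtain ⟨h0, h1⟩ := exMean_mem hpos hlt hsum hx i
  rw [mean_eq_exMean hlt i]
  have a := kl_mix_le (hx i).1 (hx i).2 h0 h1 (hpos i).le (hlt i).le
  have b := kl_nonneg (hx i).1 (hx i).2 h0 h1
  nlinarith [mul_nonneg (hpos i).le b]

lemma sum_split (D : Finset ι) (hsum : ∑ i, w i = 1) (a b : ℝ) :
    ∑ i, w i * (if i ∈ D then a else b) = (∑ i ∈ D, w i) * a + (1 - ∑ i ∈ D, w i) * b := by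
  have h : ∀ i, w i * (if i ∈ D then a else b) = (if i ∈ D then w i else 0) * (a - b) + w i * b := by
    intro i; split_ifs <;> ring
  simp only [h, Finset.sum_add_distrib, ← Finset.sum_mul, Finset.sum_ite_mem, Finset.univ_inter,
    hsum]
  ring

lemma MI_le_ejs (hpos : ∀ i, 0 < w i) (hlt : ∀ i, w i < 1) (hsum : ∑ i, w i = 1)
    (D : Finset ι) {p : ℝ} (hp0 : 0 < p) (hp1 : p < 1) :
    MI (∑ i ∈ D, w i) p ≤ ∑ i, w i * KLb (bern (if i ∈ D then 1 - p else p))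
      (bern (exMean w (fun j => if j ∈ D then 1 - p else p) i)) := by
  have hx : ∀ i, 0 < (if i ∈ D then 1 - p else p) ∧ (if i ∈ D then 1 - p else p) < 1 := by
    intro i; split_ifs <;> constructor <;> linarith
  have h := js_le_ejs (x := fun j => if j ∈ D then 1 - p else p) hpos hlt hsum hx
  refine le_trans (le_of_eq ?_) h
  have hq0 : 0 ≤ ∑ i ∈ D, w i := Finset.sum_nonneg fun i _ => (hpos i).le
  have hq1 : ∑ i ∈ D, w i ≤ 1 := hsum ▸
    Finset.sum_le_sum_of_subset_of_nonneg (Finset.subset_univ D) fun i _ _ => (hpos i).le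
  rw [sum_split D hsum, MI_eq hp0 hp1 hq0 hq1, ← sum_split D hsum]
  refine Finset.sum_congr rfl fun i _ => ?_
  by_cases hi : i ∈ D <;> simp [hi]

/-- When the selected set is the singleton `{a}`, the extrinsic law of `a` is exactly `Bern p`. -/
lemma leaf_le_ejs (hpos : ∀ i, 0 < w i) (hlt : ∀ i, w i < 1) (hsum : ∑ i, w i = 1)
    (D : Finset ι) (a : ι) (hD : ∀ i, i ∈ D ↔ i = a) {p : ℝ} (hp0 : 0 < p) (hp1 : p < 1) :
    w a * C1 p ≤ ∑ i, w i * KLb (bern (if i ∈ D then 1 - p else p))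
      (bern (exMean w (fun j => if j ∈ D then 1 - p else p) i)) := by
  have hx : ∀ i, 0 < (if i ∈ D then 1 - p else p) ∧ (if i ∈ D then 1 - p else p) < 1 := by
    intro i; split_ifs <;> constructor <;> linarith
  have e : exMean w (fun j => if j ∈ D then 1 - p else p) a = p := by
    have h : 1 - w a ≠ 0 := by linarith [hlt a]
    rw [exMean, div_eq_iff h, ← sum_erase_weights hsum, Finset.mul_sum]
    refine Finset.sum_congr rfl fun j hj => ?_
    have : j ∉ D := by rw [hD]; exact Finset.ne_of_mem_erase hj
    simp only [this, if_false]; ring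
  have h := Finset.single_le_sum (f := fun i => w i * KLb (bern (if i ∈ D then 1 - p else p))
      (bern (exMean w (fun j => if j ∈ D then 1 - p else p) i)))
    (fun i _ => mul_nonneg (hpos i).le (kl_nonneg (hx i).1 (hx i).2
      (exMean_mem hpos hlt hsum hx i).1 (exMean_mem hpos hlt hsum hx i).2)) (mem_univ a)
  simp only [e, (hD a).2 rfl, if_true, C1_symm] at h
  exact h

end Partition

/-! ### The descent in the tree -/

lemma mem_node {S l k : ℕ} {i : Fin (2^S)} :
    i ∈ node S l k ↔ k * 2^(S - l) ≤ (i : ℕ) ∧ (i : ℕ) < (k+1) * 2^(S - l) := by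
  simp [node]

lemma two_pow_sub {S l : ℕ} (hl : l < S) : 2^(S - l) = 2 * 2^(S - (l+1)) := by
  rw [← pow_succ']; congr 1; omega

lemma mem_node_child {S l k : ℕ} (hl : l < S) {i : Fin (2^S)} :
    i ∈ node S l k ↔ i ∈ node S (l+1) (2*k) ∨ i ∈ node S (l+1) (2*k+1) := by
  simp only [mem_node, two_pow_sub hl]
  have e1 : k * (2 * 2^(S - (l+1))) = 2 * k * 2^(S - (l+1)) := by ring
  have e2 : (k+1) * (2 * 2^(S - (l+1))) = (2 * k + 1 + 1) * 2^(S - (l+1)) := by ring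
  have e3 : (2 * k + 1) * 2^(S - (l+1)) = 2 * k * 2^(S - (l+1)) + 2^(S - (l+1)) := by ring
  have e4 : (2 * k + 1 + 1) * 2^(S - (l+1)) =
    2 * k * 2^(S - (l+1)) + 2^(S - (l+1)) + 2^(S - (l+1)) := by ring
  rw [e1, e2, e3, e4]
  omega

lemma mass_child {S l k : ℕ} (hl : l < S) (π : Fin (2^S) → ℝ) :
    mass S π l k = mass S π (l+1) (2*k) + mass S π (l+1) (2*k+1) := by
  rw [mass, mass, mass, ← Finset.sum_union]
  · congr 1
    ext i
    rw [Finset.mem_union, mem_node_child hl]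
  · rw [Finset.disjoint_left]
    intro i h1 h2
    rw [mem_node] at h1 h2
    omega

lemma node_leaf {S k : ℕ} {i : Fin (2^S)} : i ∈ node S S k ↔ (i : ℕ) = k := by
  rw [mem_node]; simp; omega

lemma mass_root {S : ℕ} {π : Fin (2^S) → ℝ} (hsum : ∑ i, π i = 1) : mass S π 0 0 = 1 := by
  rw [mass, ← hsum]
  congr 1
  ext i
  simp [mem_node]

lemma mass_ge {S : ℕ} {π : Fin (2^S) → ℝ} (hpos : ∀ i, 0 < π i) {l k : ℕ} {i : Fin (2^S)}
    (hi : i ∈ node S l k) : π i ≤ mass S π l k :=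
  Finset.single_le_sum (f := π) (fun j _ => (hpos j).le) hi

lemma mass_le_one {S : ℕ} {π : Fin (2^S) → ℝ} (hpos : ∀ i, 0 < π i) (hsum : ∑ i, π i = 1)
    (l k : ℕ) : mass S π l k ≤ 1 :=
  hsum ▸ Finset.sum_le_sum_of_subset_of_nonneg (Finset.subset_univ _) fun i _ _ => (hpos i).le

/-- Started at a node of mass `> 1/2`, the descent ends at a node of mass in `[1/3, 2/3]` or at a
leaf of mass `> 1/2`. The bounds `1/3` and `2/3` hold because the heavier child has at least half
the mass of its parent. -/
lemma descend_spec {S : ℕ} (π : Fin (2^S) → ℝ) (fuel : ℕ) : ∀ l k, fuel + l = S →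
    1/2 < mass S π l k →
    (descend S π fuel l k = (l, k) ∨ l + 1 ≤ (descend S π fuel l k).1) ∧
    (descend S π fuel l k).1 ≤ S ∧
    ((1/3 ≤ mass S π (descend S π fuel l k).1 (descend S π fuel l k).2 ∧
        mass S π (descend S π fuel l k).1 (descend S π fuel l k).2 ≤ 2/3) ∨
      ((descend S π fuel l k).1 = S ∧
        1/2 < mass S π (descend S π fuel l k).1 (descend S π fuel l k).2)) := by
  induction fuel with
  | zero =>
    intro l k hl hm
    exact ⟨Or.inl rfl, by simp [descend]; omega, Or.inr ⟨by simp [descend]; omega, hm⟩⟩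
  | succ n ih =>
    intro l k hl hm
    have hlS : l < S := by omega
    have hc := mass_child (k := k) hlS π
    rw [descend, if_neg hlS.ne]
    extract_lets k'
    have hhalf : mass S π l k ≤ 2 * mass S π (l+1) k' := by
      simp only [k']; split_ifs with h <;> linarith
    split_ifs with h1 h2
    · obtain ⟨ha, hb, hd⟩ := ih (l+1) k' (by omega) h1
      refine ⟨Or.inr ?_, hb, hd⟩
      rcases ha with ha | ha
      · rw [ha]
      · omega
    · refine ⟨Or.inr le_rfl, hlS, Or.inl ?_⟩
      rw [abs_of_nonpos (by linarith), abs_of_pos (by linarith)] at h2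
      constructor <;> dsimp only <;> linarith
    · refine ⟨Or.inl rfl, hlS.le, Or.inl ?_⟩
      rw [abs_of_nonpos (by linarith), abs_of_pos (by linarith)] at h2
      constructor <;> dsimp only <;> linarith

/-- The descent follows a leaf of mass `> 1/2`: the child containing it is the heavier one. -/
lemma descend_heavy_leaf {S : ℕ} {π : Fin (2^S) → ℝ} (hpos : ∀ i, 0 < π i)
    (hsum : ∑ i, π i = 1) (a : Fin (2^S)) (ha : 1/2 < π a) (fuel : ℕ) : ∀ l k, fuel + l = S →
    a ∈ node S l k → descend S π fuel l k = (S, (a : ℕ)) := by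
  induction fuel with
  | zero =>
    intro l k hl hm
    obtain rfl : l = S := by omega
    rw [node_leaf] at hm
    simp [descend, hm]
  | succ n ih =>
    intro l k hl hm
    have hlS : l < S := by omega
    have hc := mass_child (k := k) hlS π
    have h1 := mass_le_one hpos hsum l k
    rw [descend, if_neg hlS.ne]
    extract_lets k'
    have hk' : a ∈ node S (l+1) k' := by
      rcases (mem_node_child hlS).1 hm with h | h
      · have := mass_ge hpos h
        simp only [k']
        rwa [if_pos (by linarith)]
      · have := mass_ge hpos h
        simp only [k']
        rwa [if_neg (by linarith)]
    rw [if_pos (by linarith [mass_ge hpos hk'])]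
    exact ih _ _ (by omega) hk'

lemma EJS_eq (S : ℕ) (p : ℕ → ℝ) (π : Fin (2^S) → ℝ) (hlt1 : ∀ i, π i < 1)
    (hsum : ∑ i, π i = 1) {l k : ℕ} (hs : select S π = (l, k)) :
    EJS S p π = ∑ i, π i * KLb (bern (if i ∈ node S l k then 1 - p l else p l))
      (bern (exMean π (fun j => if j ∈ node S l k then 1 - p l else p l) i)) := by
  simp only [EJS, hs]
  refine Finset.sum_congr rfl fun i _ => ?_
  rw [← mixture_eq hsum hlt1 i]
  rfl

/-- Monotonicity of the noise levels, in the form `p S ≤ p l ≤ p 1`. -/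
lemma noise_mem {S : ℕ} {p : ℕ → ℝ} (hdec : ∀ l, 1 ≤ l → l < S → p (l+1) < p l) {l : ℕ}
    (h1 : 1 ≤ l) (hl : l ≤ S) : p S ≤ p l ∧ p l ≤ p 1 := by
  constructor
  · induction S, hl using Nat.le_induction with
    | base => exact le_rfl
    | succ n hn ih =>
      exact (hdec n (h1.trans hn) (Nat.lt_succ_self n)).le.trans
        (ih fun m hm hmn => hdec m hm (hmn.trans (Nat.lt_succ_self n)))
  · induction l, h1 using Nat.le_induction with
    | base => exact le_rfl
    | succ n hn ih => exact (hdec n hn hl).le.trans (ih (by omega))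

/-- Lower bounds on the EJS divergence under hiePM selection:
(i) `EJS(π) ≥ I(1/3; p[l])`, where `l` is the level of the selected node; and
(ii) for any `π̃ ∈ (1/2,1)`, if `maxᵢ πᵢ ≥ π̃` then `EJS(π) ≥ π̃ · C1(p[S])`. -/
theorem EJS_lower_bounds (S : ℕ) (hS : 1 ≤ S) (p : ℕ → ℝ)
    (hp1 : p 1 < 1/2) (hdec : ∀ l, 1 ≤ l → l < S → p (l+1) < p l) (hpS : 0 < p S)
    (π : Fin (2^S) → ℝ) (hpos : ∀ i, 0 < π i) (hlt1 : ∀ i, π i < 1)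
    (hsum : ∑ i, π i = 1) :
    MI (1/3) (p (select S π).1) ≤ EJS S p π ∧
    ∀ πt : ℝ, 1/2 < πt → πt < 1 → (∃ i, πt ≤ π i) → πt * C1 (p S) ≤ EJS S p π := by
  have hroot := mass_root hsum
  obtain ⟨hA, hB, hC⟩ := descend_spec π S 0 0 rfl (by rw [hroot]; norm_num)
  change select S π = (0, 0) ∨ 0 + 1 ≤ (select S π).1 at hA
  change (select S π).1 ≤ S at hB
  change (1/3 ≤ mass S π (select S π).1 (select S π).2 ∧
    mass S π (select S π).1 (select S π).2 ≤ 2/3) ∨ ((select S π).1 = S ∧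
    1/2 < mass S π (select S π).1 (select S π).2) at hC
  have hpS1 : p S < 1 := by linarith [(noise_mem hdec hS le_rfl).2]
  constructor
  · obtain ⟨l, k, hs⟩ : ∃ l k, select S π = (l, k) := ⟨_, _, rfl⟩
    rw [EJS_eq S p π hlt1 hsum hs]
    rw [hs] at hA hB hC ⊢
    dsimp only at hA hB hC ⊢
    have hl : 1 ≤ l := by
      rcases hA with h | h
      -- The root has mass `1` and is not a leaf, so it is never selected.
      · obtain ⟨rfl, rfl⟩ := Prod.mk.inj h
        rcases hC with h | h
        · rw [hroot] at h; norm_num at h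
        · omega
      · exact h
    obtain ⟨hn0, hn1⟩ := noise_mem hdec hl hB
    have hp0 : 0 < p l := by linarith
    have hp1' : p l < 1 := by linarith
    rcases hC with ⟨h1, h2⟩ | ⟨rfl, h⟩
    · exact (MI_third_le hp0 hp1' h1 h2).trans (MI_le_ejs hpos hlt1 hsum _ hp0 hp1')
    · have hne : (node l l k).Nonempty := by
        by_contra hc
        rw [Finset.not_nonempty_iff_eq_empty] at hc
        rw [mass, hc, Finset.sum_empty] at h
        norm_num at h
      obtain ⟨a, ha⟩ := hne
      have hD : ∀ i, i ∈ node l l k ↔ i = a := by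
        intro i
        rw [node_leaf] at ha ⊢
        rw [Fin.ext_iff, ha]
      have hmass : mass l π l k = π a := by
        have : node l l k = {a} := by ext i; rw [hD, Finset.mem_singleton]
        rw [mass, this, Finset.sum_singleton]
      rw [hmass] at h
      refine le_trans ?_ (leaf_le_ejs hpos hlt1 hsum _ a hD hp0 hp1')
      refine (MI_third_le_C1 hp0 hp1').trans ?_
      exact mul_le_mul_of_nonneg_right (by linarith) (C1_nonneg hp0 hp1')
  · rintro πt h1 - ⟨a, ha⟩
    have hs : select S π = (S, (a : ℕ)) :=
      descend_heavy_leaf hpos hsum a (by linarith) S 0 0 rfl (by simp [mem_node])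
    rw [EJS_eq S p π hlt1 hsum hs]
    refine le_trans ?_ (leaf_le_ejs hpos hlt1 hsum _ a
      (fun i => by rw [node_leaf, Fin.ext_iff]) hpS hpS1)
    exact mul_le_mul_of_nonneg_right ha (C1_nonneg hpS hpS1)

end
end

section
/- The average log-likelihood is a submartingale under Bayes updating with expected drift equal to the Extrinsic Jensen–Shannon divergence: Σ_{z∈Z} P_Z(z) · U(π'(z)) = U(π) + EJS(π). -/
/-!
The Bayes odds of hypothesis `i` factor as prior odds times likelihood ratio:
with `R = ∑_{j ≠ i} πⱼ P_{Z|j}(z)` the posterior odds are `πᵢ P_{Z|i}(z) / R`, which is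
`πᵢ / (1 - πᵢ)` times `P_{Z|i}(z) / (R / (1 - πᵢ))`. Taking logarithms and weighting by the joint
probability `πᵢ P_{Z|i}(z)`, the prior odds sum over `z` to `U(π)` because `P_{Z|i}` has total mass
one, and the likelihood ratios sum to the divergence (`bayes_term`).
-/

noncomputable section

/-- KL divergence between two pmfs on a finite alphabet (natural logarithm). -/
def KLf {Z : Type*} [Fintype Z] (P Q : Z → ℝ) : ℝ := ∑ z, P z * Real.log (P z / Q z)

/-- Average log-likelihood `U(π) = Σᵢ πᵢ log(πᵢ/(1−πᵢ))`. -/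
def avgLL {M : ℕ} (π : Fin M → ℝ) : ℝ := ∑ i, π i * Real.log (π i / (1 - π i))

/-- Extrinsic Jensen–Shannon divergence `EJS(π) = Σᵢ πᵢ D(P_{Z|i} ‖ P_{Z|≠i})`,
where `P_{Z|≠i}(z) = Σ_{j≠i} (πⱼ/(1−πᵢ)) P_{Z|j}(z)`. -/
def EJSgen {M : ℕ} {Z : Type*} [Fintype Z] (π : Fin M → ℝ) (P : Fin M → Z → ℝ) : ℝ :=
  ∑ i, π i * KLf (P i) (fun z => (∑ j ∈ Finset.univ.erase i, π j * P j z) / (1 - π i))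

/-- Log posterior odds equal log prior odds plus the log-likelihood ratio, weighted by the joint
probability `p * l`. Here `p` is the prior, `l` the likelihood, and `R` the joint probability of the
observation with the other hypotheses, so `p * l + R` is the probability of the observation. -/
lemma bayes_term {p l R : ℝ} (hp : 0 < p) (hp1 : p < 1) (hl : 0 < l) (hR : 0 < R) :
    (p * l + R) * (p * l / (p * l + R) *
        Real.log (p * l / (p * l + R) / (1 - p * l / (p * l + R))))
      = p * (l * Real.log (p / (1 - p)) + l * Real.log (l / (R / (1 - p)))) := by
  have h1 : 0 < 1 - p := sub_pos.2 hp1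
  have hS : 0 < p * l + R := by positivity
  have hodds : p * l / (p * l + R) / (1 - p * l / (p * l + R))
      = p / (1 - p) * (l / (R / (1 - p))) := by
    have : 1 - p * l / (p * l + R) = R / (p * l + R) := by
      field_simp
      ring
    rw [this]
    field_simp
  rw [hodds, Real.log_mul (by positivity) (by positivity)]
  field_simp

/-- The average log-likelihood is a submartingale under Bayes updating, with
expected drift exactly the Extrinsic Jensen–Shannon divergence:
`Σ_z P_Z(z) U(π'(z)) = U(π) + EJS(π)`, where `P_Z(z) = Σᵢ πᵢ P_{Z|i}(z)` and
`π'ᵢ(z) = πᵢ P_{Z|i}(z) / P_Z(z)`. -/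
theorem avgLL_drift_eq_EJS (M : ℕ) (hM : 2 ≤ M) (Z : Type*) [Fintype Z]
    (π : Fin M → ℝ) (hpos : ∀ i, 0 < π i) (hlt1 : ∀ i, π i < 1)
    (hsum : ∑ i, π i = 1)
    (P : Fin M → Z → ℝ) (hP : ∀ i z, 0 < P i z) (hPsum : ∀ i, ∑ z, P i z = 1) :
    ∑ z, (∑ i, π i * P i z) * avgLL (fun i => π i * P i z / ∑ j, π j * P j z)
      = avgLL π + EJSgen π P := by
  unfold avgLL EJSgen KLf
  simp only [Finset.mul_sum]
  rw [Finset.sum_comm, ← Finset.sum_add_distrib]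
  refine Finset.sum_congr rfl fun i _ => ?_
  -- The prior term is spread over the alphabet using the total mass of `P i`.
  have hprior : π i * Real.log (π i / (1 - π i))
      = ∑ z, π i * (P i z * Real.log (π i / (1 - π i))) := by
    rw [← Finset.mul_sum, ← Finset.sum_mul, hPsum, one_mul]
  rw [hprior, ← Finset.sum_add_distrib]
  refine Finset.sum_congr rfl fun z _ => ?_
  -- A second hypothesis exists as `2 ≤ M`, so the posterior odds have a nonzero denominator.
  have hne : (Finset.univ.erase i).Nonempty := by
    rw [← Finset.card_pos, Finset.card_erase_of_mem (Finset.mem_univ i), Finset.card_fin]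
    omega
  have hR : 0 < ∑ j ∈ Finset.univ.erase i, π j * P j z :=
    Finset.sum_pos (fun j _ => mul_pos (hpos j) (hP j z)) hne
  rw [← Finset.add_sum_erase Finset.univ (fun j => π j * P j z) (Finset.mem_univ i),
    bayes_term (hpos i) (hlt1 i) (hP i z) hR, mul_add]

end
end

section
/- The Extrinsic Jensen–Shannon divergence is lower bounded by the Jensen–Shannon divergence: EJS(π) ≥ JS(π). -/
/-!
The inequality holds termwise in `i`. Write `a = π i`, `p = P i`, and let `q` be the mixture of the
other laws, so that `P_Z = a p + (1 - a) q`. Then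
`D(p ‖ q) - D(p ‖ P_Z) = ∑ z, p z * log (P_Z z / q z)`, and `log x ≥ 1 - x⁻¹` bounds each summand
below by `a (p z - q z)` (`mul_log_div_mix_le`). Since `p` and `q` have the same total mass, these
bounds sum to zero (`KLf_mix_le`).
-/

noncomputable section

/-- Jensen–Shannon divergence `JS(π) = Σᵢ πᵢ D(P_{Z|i} ‖ P_Z)`,
where `P_Z(z) = Σᵢ πᵢ P_{Z|i}(z)`. -/
def JSgen {M : ℕ} {Z : Type*} [Fintype Z] (π : Fin M → ℝ) (P : Fin M → Z → ℝ) : ℝ :=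
  ∑ i, π i * KLf (P i) (fun z => ∑ j, π j * P j z)

/-- Pointwise comparison of the integrands of `D(p ‖ a p + (1 - a) q)` and `D(p ‖ q)`; the
correction `a (p - q)` vanishes after summation over the alphabet. -/
lemma mul_log_div_mix_le {a p q : ℝ} (ha : 0 < a) (ha1 : a < 1) (hp : 0 < p) (hq : 0 < q) :
    p * Real.log (p / (a * p + (1 - a) * q)) + a * (p - q) ≤ p * Real.log (p / q) := by
  have hb : 0 < 1 - a := sub_pos.mpr ha1
  obtain ⟨r, hr⟩ : ∃ r, r = a * p + (1 - a) * q := ⟨_, rfl⟩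
  have hr0 : 0 < r := by rw [hr]; positivity
  have hlog : 1 - q / r ≤ Real.log r - Real.log q := by
    have h := Real.one_sub_inv_le_log_of_pos (div_pos hr0 hq)
    rwa [inv_div, Real.log_div hr0.ne' hq.ne'] at h
  have hmul := mul_le_mul_of_nonneg_left hlog hp.le
  -- The gap is a square: `p (r - q) - a (p - q) r = a (1 - a) (p - q) ^ 2`.
  have hgap : a * (p - q) ≤ p * (1 - q / r) := by
    have h : p * (1 - q / r) - a * (p - q) = a * (1 - a) * (p - q) ^ 2 / r := by
      field_simp
      rw [hr]
      ring
    have h0 : 0 ≤ a * (1 - a) * (p - q) ^ 2 / r := by positivity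
    linarith
  rw [← hr, Real.log_div hp.ne' hr0.ne', Real.log_div hp.ne' hq.ne']
  linarith

/-- Mixing the reference law with `P` itself decreases the divergence from `P`. -/
lemma KLf_mix_le {Z : Type*} [Fintype Z] {a : ℝ} {P Q : Z → ℝ} (ha : 0 < a) (ha1 : a < 1)
    (hP : ∀ z, 0 < P z) (hQ : ∀ z, 0 < Q z) (hPQ : ∑ z, P z = ∑ z, Q z) :
    KLf P (fun z => a * P z + (1 - a) * Q z) ≤ KLf P Q := by
  have h := Finset.sum_le_sum fun z (_ : z ∈ Finset.univ) =>
    mul_log_div_mix_le ha ha1 (hP z) (hQ z)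
  rw [Finset.sum_add_distrib, ← Finset.mul_sum, Finset.sum_sub_distrib, hPQ, sub_self, mul_zero,
    add_zero] at h
  exact h

/-- The Extrinsic Jensen–Shannon divergence is lower bounded by the
Jensen–Shannon divergence: `EJS(π) ≥ JS(π)`. -/
theorem EJS_ge_JS (M : ℕ) (hM : 2 ≤ M) (Z : Type*) [Fintype Z]
    (π : Fin M → ℝ) (hpos : ∀ i, 0 < π i) (hlt1 : ∀ i, π i < 1)
    (hsum : ∑ i, π i = 1)
    (P : Fin M → Z → ℝ) (hP : ∀ i z, 0 < P i z) (hPsum : ∀ i, ∑ z, P i z = 1) :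
    JSgen π P ≤ EJSgen π P := by
  refine Finset.sum_le_sum fun i _ => mul_le_mul_of_nonneg_left ?_ (hpos i).le
  have hb : 0 < 1 - π i := sub_pos.mpr (hlt1 i)
  have herase : ∑ j ∈ Finset.univ.erase i, π j = 1 - π i := by
    rw [← hsum, ← Finset.add_sum_erase _ π (Finset.mem_univ i)]
    ring
  have hne : (Finset.univ.erase i).Nonempty := by
    refine Finset.nonempty_of_sum_ne_zero (f := π) ?_
    rw [herase]
    exact hb.ne'
  have hmix : (fun z => ∑ j, π j * P j z) = fun z => π i * P i z +
      (1 - π i) * ((∑ j ∈ Finset.univ.erase i, π j * P j z) / (1 - π i)) := by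
    funext z
    rw [mul_div_cancel₀ _ hb.ne',
      Finset.add_sum_erase _ (fun j => π j * P j z) (Finset.mem_univ i)]
  rw [hmix]
  refine KLf_mix_le (hpos i) (hlt1 i) (hP i) (fun z => ?_) ?_
  · exact div_pos (Finset.sum_pos (fun j _ => mul_pos (hpos j) (hP j z)) hne) hb
  · rw [hPsum i, ← Finset.sum_div, Finset.sum_comm]
    simp_rw [← Finset.mul_sum, hPsum, mul_one]
    rw [herase, div_self hb.ne']

end
end

section
/- Let π be a probability vector with entries π_q ∈ (0,1). If Σ_q π_q log(π_q/(1−π_q)) ≥ log 2, then max_q π_q ≥ 2/3. -/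
noncomputable section

/-- If the average log-likelihood `Σ_q π_q log(π_q/(1−π_q))` of a probability
vector `π` with entries in `(0,1)` is at least `log 2`, then `max_q π_q ≥ 2/3`. -/
theorem max_ge_of_avgLL_ge {M : ℕ} (π : Fin M → ℝ)
    (hpos : ∀ q, 0 < π q) (hlt1 : ∀ q, π q < 1) (hsum : ∑ q, π q = 1)
    (h : Real.log 2 ≤ ∑ q, π q * Real.log (π q / (1 - π q))) :
    ∃ q, 2/3 ≤ π q := by
  by_contra! hall
  have hne : (Finset.univ : Finset (Fin M)).Nonempty := by
    rw [Finset.nonempty_iff_ne_empty]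
    intro he
    simp [he] at hsum
  -- For `0 < x < 2/3` one has `x / (1 - x) < 2`: the sum is a weighted mean of numbers below `log 2`.
  have hlt : ∑ q, π q * Real.log (π q / (1 - π q)) < ∑ q, π q * Real.log 2 := by
    refine Finset.sum_lt_sum_of_nonempty hne fun q _ => ?_
    have h1 : 0 < 1 - π q := sub_pos.mpr (hlt1 q)
    refine mul_lt_mul_of_pos_left (Real.log_lt_log (div_pos (hpos q) h1) ?_) (hpos q)
    rw [div_lt_iff₀ h1]
    linarith [hall q]
  rw [← Finset.sum_mul, hsum, one_mul] at hlt
  exact hlt.not_ge h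

end
end
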